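/- arXiv:2510.21334 — 2 statements merged into one kernel-verified Lean document; each statement's English description precedes it below -/
import Mathlib

section
/- There exists an injective homomorphism ρ from the free group F₂ on two generators into the affine group Aff(ℝ³) such that the resulting action of F₂ on ℝ³ is free and properly discontinuous. (Margulis: non-abelian free groups admit proper affine actions on ℝ³.) -/
namespace Margulis

/-- invariant symmetric form -/
def Bf (x : Fin 3 → ℝ) (P Q : ℝ × ℝ) : ℝ :=
  x 0 * P.1 * Q.1 + x 1 * (P.1 * Q.2 + P.2 * Q.1) + x 2 * P.2 * Q.2

/-- area form -/
def om (P Q : ℝ × ℝ) : ℝ := P.1 * Q.2 - P.2 * Q.1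

/-- linear part of the first generator -/
noncomputable def LA : (Fin 3 → ℝ) ≃ₗ[ℝ] (Fin 3 → ℝ) where
  toFun x := ![x 0 / 9, x 1, 9 * x 2]
  invFun x := ![9 * x 0, x 1, x 2 / 9]
  map_add' x y := by ext i; fin_cases i <;> simp <;> ring
  map_smul' x y := by ext i; fin_cases i <;> simp <;> ring
  left_inv x := by ext i; fin_cases i <;> simp <;> ring
  right_inv x := by ext i; fin_cases i <;> simp <;> ring

/-- linear part of the second generator -/
noncomputable def LB : (Fin 3 → ℝ) ≃ₗ[ℝ] (Fin 3 → ℝ) where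
  toFun x := ![(25 * x 0 - 40 * x 1 + 16 * x 2) / 9, (-20 * x 0 + 41 * x 1 - 20 * x 2) / 9,
    (16 * x 0 - 40 * x 1 + 25 * x 2) / 9]
  invFun x := ![(25 * x 0 + 40 * x 1 + 16 * x 2) / 9, (20 * x 0 + 41 * x 1 + 20 * x 2) / 9,
    (16 * x 0 + 40 * x 1 + 25 * x 2) / 9]
  map_add' x y := by ext i; fin_cases i <;> simp <;> ring
  map_smul' x y := by ext i; fin_cases i <;> simp <;> ring
  left_inv x := by ext i; fin_cases i <;> simp <;> ring
  right_inv x := by ext i; fin_cases i <;> simp <;> ring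

/-- affine map with given linear part and translation -/
def mkT (L : (Fin 3 → ℝ) ≃ₗ[ℝ] (Fin 3 → ℝ)) (u : Fin 3 → ℝ) :
    (Fin 3 → ℝ) ≃ᵃ[ℝ] (Fin 3 → ℝ) where
  toFun x := L x + u
  invFun x := L.symm (x - u)
  left_inv x := by simp
  right_inv x := by simp
  linear := L
  map_vadd' p v := by simp [add_assoc]

/-- the generators -/
noncomputable def T : Fin 2 → ((Fin 3 → ℝ) ≃ᵃ[ℝ] (Fin 3 → ℝ)) :=
  ![mkT LA ![0, 1, 0], mkT LB ![-1, 0, 1]]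

/-- the representation -/
noncomputable def rho : FreeGroup (Fin 2) →* ((Fin 3 → ℝ) ≃ᵃ[ℝ] (Fin 3 → ℝ)) :=
  FreeGroup.lift T

/-- a letter as an affine map -/
noncomputable def tau (s : Fin 2 × Bool) : (Fin 3 → ℝ) ≃ᵃ[ℝ] (Fin 3 → ℝ) :=
  rho (FreeGroup.mk [s])

/-- linear action on the plane -/
noncomputable def act : Fin 2 × Bool → ℝ × ℝ → ℝ × ℝ
  | (0, true), P => (3 * P.1, P.2 / 3)
  | (0, false), P => (P.1 / 3, 3 * P.2)
  | (1, true), P => ((5 * P.1 + 4 * P.2) / 3, (4 * P.1 + 5 * P.2) / 3)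
  | (1, false), P => ((5 * P.1 - 4 * P.2) / 3, (-4 * P.1 + 5 * P.2) / 3)

/-- narrow cones -/
def C : Fin 2 × Bool → ℝ × ℝ → Prop
  | (0, true), P => 9 * P.2 ^ 2 ≤ P.1 ^ 2 ∧ 0 < P.1 ^ 2
  | (0, false), P => 9 * P.1 ^ 2 ≤ P.2 ^ 2 ∧ 0 < P.2 ^ 2
  | (1, true), P => 9 * (P.1 - P.2) ^ 2 ≤ (P.1 + P.2) ^ 2 ∧ 0 < (P.1 + P.2) ^ 2
  | (1, false), P => 9 * (P.1 + P.2) ^ 2 ≤ (P.1 - P.2) ^ 2 ∧ 0 < (P.1 - P.2) ^ 2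

/-- wide cones -/
def E : Fin 2 × Bool → ℝ × ℝ → Prop
  | (0, true), P => P.1 ^ 2 ≤ 4 * P.2 ^ 2 ∧ 0 < P.2 ^ 2
  | (0, false), P => P.2 ^ 2 ≤ 4 * P.1 ^ 2 ∧ 0 < P.1 ^ 2
  | (1, true), P => (P.1 + P.2) ^ 2 ≤ 4 * (P.1 - P.2) ^ 2 ∧ 0 < (P.1 - P.2) ^ 2
  | (1, false), P => (P.1 - P.2) ^ 2 ≤ 4 * (P.1 + P.2) ^ 2 ∧ 0 < (P.1 + P.2) ^ 2

/-- inverse letter -/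
def iv (s : Fin 2 × Bool) : Fin 2 × Bool := (s.1, !s.2)

/-- translation parts -/
def tr : Fin 2 × Bool → Fin 3 → ℝ
  | (0, true) => ![0, 1, 0]
  | (0, false) => ![0, -1, 0]
  | (1, true) => ![-1, 0, 1]
  | (1, false) => ![1, 0, -1]

lemma C_sub_E (s t : Fin 2 × Bool) (h : s ≠ t) (P : ℝ × ℝ) (hP : C t P) : E s P := by
  obtain ⟨x, y⟩ := P
  obtain ⟨i, e⟩ := s
  obtain ⟨j, f⟩ := t
  fin_cases i <;> fin_cases j <;> cases e <;> cases f <;> simp [C, E] at h hP ⊢ <;>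
    obtain ⟨h1, h2⟩ := hP
  all_goals
    first
    | (have h3 := sq_nonneg (x - 3 * y)
       have h4 := sq_nonneg (x + 3 * y)
       have h5 := sq_nonneg (3 * x - y)
       have h6 := sq_nonneg (3 * x + y)
       have h7 := sq_nonneg (x - y)
       have h8 := sq_nonneg (x + y)
       have h9 := sq_nonneg (x - 2 * y)
       have h10 := sq_nonneg (x + 2 * y)
       have h11 := sq_nonneg (2 * x - y)
       have h12 := sq_nonneg (2 * x + y)
       constructor
       · nlinarith
       · nlinarith)

lemma act_mem (s : Fin 2 × Bool) (P : ℝ × ℝ) (hP : E (iv s) P) : C s (act s P) := by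
  obtain ⟨x, y⟩ := P
  obtain ⟨i, e⟩ := s
  fin_cases i <;> cases e <;> simp only [C, E, iv, act] at hP ⊢ <;>
    obtain ⟨h1, h2⟩ := hP <;> constructor <;> nlinarith

lemma om_act (s : Fin 2 × Bool) (P Q : ℝ × ℝ) : om (act s P) Q = om P (act (iv s) Q) := by
  obtain ⟨i, e⟩ := s
  fin_cases i <;> cases e <;> simp [om, iv, act] <;> ring

lemma tau_act (s : Fin 2 × Bool) (x : Fin 3 → ℝ) (P Q : ℝ × ℝ) :
    Bf (tau s x) (act s P) Q = Bf x P (act (iv s) Q) + Bf (tr s) (act s P) Q := by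
  obtain ⟨i, e⟩ := s
  have hA : ∀ x, T 0 x = LA x + ![0, 1, 0] := fun x => rfl
  have hB : ∀ x, T 1 x = LB x + ![-1, 0, 1] := fun x => rfl
  have hA' : ∀ x, (T 0)⁻¹ x = LA.symm (x - ![0, 1, 0]) := fun x => rfl
  have hB' : ∀ x, (T 1)⁻¹ x = LB.symm (x - ![-1, 0, 1]) := fun x => rfl
  have hLA : ∀ x : Fin 3 → ℝ, LA x = ![x 0 / 9, x 1, 9 * x 2] := fun x => rfl
  have hLA' : ∀ x : Fin 3 → ℝ, LA.symm x = ![9 * x 0, x 1, x 2 / 9] := fun x => rfl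
  have hLB : ∀ x : Fin 3 → ℝ, LB x = ![(25 * x 0 - 40 * x 1 + 16 * x 2) / 9,
    (-20 * x 0 + 41 * x 1 - 20 * x 2) / 9, (16 * x 0 - 40 * x 1 + 25 * x 2) / 9] := fun x => rfl
  have hLB' : ∀ x : Fin 3 → ℝ, LB.symm x = ![(25 * x 0 + 40 * x 1 + 16 * x 2) / 9,
    (20 * x 0 + 41 * x 1 + 20 * x 2) / 9, (16 * x 0 + 40 * x 1 + 25 * x 2) / 9] := fun x => rfl
  fin_cases i <;> cases e <;>
    simp [tau, rho, iv, act, tr, Bf, hA, hB, hA', hB', hLA, hLA', hLB, hLB',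
      Matrix.vecHead, Matrix.vecTail] <;> ring

lemma aux2 (p1 p2 q1 q2 : ℝ) (h1 : 9 * p2 ^ 2 ≤ p1 ^ 2) (h1' : 0 < p1 ^ 2)
    (h2 : q1 ^ 2 ≤ 4 * q2 ^ 2) (h2' : 0 < q2 ^ 2) :
    (p1 * q2 - p2 * q1) ^ 2 / 6 ≤ (p1 * q2 + p2 * q1) * (p1 * q2 - p2 * q1) ∧
    (p1 ^ 2 + p2 ^ 2) * (q1 ^ 2 + q2 ^ 2) ≤ 100 * (p1 * q2 - p2 * q1) ^ 2 ∧
    0 < (p1 * q2 - p2 * q1) ^ 2 := by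
  have h3 : (p2 * q1) ^ 2 * 9 ≤ 4 * (p1 * q2) ^ 2 := by
    have := mul_le_mul h1 h2 (sq_nonneg _) (sq_nonneg _)
    nlinarith
  have h4 : 0 < (p1 * q2) ^ 2 := by rw [mul_pow]; positivity
  have h5 : (p1 ^ 2 + p2 ^ 2) * (q1 ^ 2 + q2 ^ 2) ≤ (10 / 9 * p1 ^ 2) * (5 * q2 ^ 2) := by
    apply mul_le_mul <;> nlinarith [sq_nonneg q1]
  have h6 : (10 / 9 * p1 ^ 2) * (5 * q2 ^ 2) = 50 / 9 * (p1 * q2) ^ 2 := by ring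
  generalize p1 * q2 = X at *
  generalize p2 * q1 = Y at *
  have h7 := sq_nonneg (2 * X - 3 * Y)
  have h8 := sq_nonneg (X + Y)
  refine ⟨?_, ?_, ?_⟩ <;> nlinarith

lemma cone_pair (s : Fin 2 × Bool) (P Q : ℝ × ℝ) (hP : C s P) (hQ : E s Q) :
    om P Q ^ 2 / 6 ≤ Bf (tr s) P Q * om P Q ∧
    (P.1 ^ 2 + P.2 ^ 2) * (Q.1 ^ 2 + Q.2 ^ 2) ≤ 100 * om P Q ^ 2 ∧ 0 < om P Q ^ 2 := by
  obtain ⟨x, y⟩ := P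
  obtain ⟨z, w⟩ := Q
  obtain ⟨i, e⟩ := s
  fin_cases i <;> cases e <;> simp [C, E, tr, Bf, om] at hP hQ ⊢ <;>
    obtain ⟨h1, h2⟩ := hP <;> obtain ⟨h3, h4⟩ := hQ
  · obtain ⟨a, b, c⟩ := aux2 y x w z h1 (by nlinarith) h3 (by nlinarith)
    exact ⟨by linarith, by linarith, by linarith⟩
  · obtain ⟨a, b, c⟩ := aux2 x y z w h1 (by nlinarith) h3 (by nlinarith)
    exact ⟨by linarith, by linarith, by linarith⟩
  · obtain ⟨a, b, c⟩ := aux2 (x - y) (x + y) (z - w) (z + w) h1 (by nlinarith) h3 (by nlinarith)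
    exact ⟨by linarith, by linarith, by linarith⟩
  · obtain ⟨a, b, c⟩ := aux2 (x + y) (x - y) (z + w) (z - w) h1 (by nlinarith) h3 (by nlinarith)
    exact ⟨by linarith, by linarith, by linarith⟩

lemma Bf_bound (x : Fin 3 → ℝ) (M : ℝ) (hx : ‖x‖ ≤ M) (P Q : ℝ × ℝ)
    (h : (P.1 ^ 2 + P.2 ^ 2) * (Q.1 ^ 2 + Q.2 ^ 2) ≤ 100 * om P Q ^ 2) :
    |Bf x P Q * om P Q| ≤ 20 * M * om P Q ^ 2 := by
  obtain ⟨p, q⟩ := P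
  obtain ⟨r, t⟩ := Q
  have hM : 0 ≤ M := (norm_nonneg x).trans hx
  have h0 : |x 0| ≤ M := (norm_le_pi_norm x 0).trans hx
  have h1 : |x 1| ≤ M := (norm_le_pi_norm x 1).trans hx
  have h2 : |x 2| ≤ M := (norm_le_pi_norm x 2).trans hx
  have hB : |Bf x (p, q) (r, t)| ≤ M * ((|p| + |q|) * (|r| + |t|)) := by
    simp only [Bf]
    have e : M * ((|p| + |q|) * (|r| + |t|)) =
      M * |p| * |r| + M * (|p| * |t| + |q| * |r|) + M * |q| * |t| := by ring
    rw [e]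
    refine (abs_add_le _ _).trans (add_le_add ((abs_add_le _ _).trans (add_le_add ?_ ?_)) ?_)
    · rw [abs_mul, abs_mul]; gcongr
    · rw [abs_mul]
      gcongr
      refine (abs_add_le _ _).trans ?_
      rw [abs_mul, abs_mul]
    · rw [abs_mul, abs_mul]; gcongr
  have hS : (|p| + |q|) * (|r| + |t|) ≤ 20 * |om (p, q) (r, t)| := by
    apply abs_le_of_sq_le_sq' _ (by positivity) |>.2
    have a1 : (|p| + |q|) ^ 2 ≤ 2 * (p ^ 2 + q ^ 2) := by
      nlinarith [sq_nonneg (|p| - |q|), sq_abs p, sq_abs q]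
    have a2 : (|r| + |t|) ^ 2 ≤ 2 * (r ^ 2 + t ^ 2) := by
      nlinarith [sq_nonneg (|r| - |t|), sq_abs r, sq_abs t]
    have := mul_le_mul a1 a2 (sq_nonneg _) (by positivity)
    simp only at h
    rw [mul_pow, mul_pow, sq_abs]
    linarith
  rw [abs_mul]
  calc _ ≤ (M * (20 * |om (p, q) (r, t)|)) * |om (p, q) (r, t)| := by
        gcongr
        exact hB.trans (by gcongr)
    _ = 20 * M * om (p, q) (r, t) ^ 2 := by rw [← sq_abs (om _ _)]; ring

lemma iv_iv (s : Fin 2 × Bool) : iv (iv s) = s := by simp [iv]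

lemma R_ne {s t : Fin 2 × Bool} (h : s.1 = t.1 → s.2 = t.2) : iv s ≠ t := by
  rintro rfl
  simp [iv] at h

lemma C_nonempty (s : Fin 2 × Bool) : ∃ P, C s P := by
  obtain ⟨i, e⟩ := s
  fin_cases i <;> cases e
  · exact ⟨(0, 1), by simp [C]⟩
  · exact ⟨(1, 0), by simp [C]⟩
  · exact ⟨(1, -1), by norm_num [C]⟩
  · exact ⟨(1, 1), by norm_num [C]⟩

lemma main (x : Fin 3 → ℝ) (M : ℝ) (hx : ‖x‖ ≤ M) (t : Fin 2 × Bool) :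
    ∀ (L : List (Fin 2 × Bool)) (s₀ : Fin 2 × Bool) (Q : ℝ × ℝ), C (iv s₀) Q →
      FreeGroup.IsReduced (s₀ :: (L ++ [t])) →
      ∃ s P, iv s₀ ≠ s ∧ C s P ∧
        ((L.length : ℝ) / 6 - 20 * M) * om P Q ^ 2 ≤ Bf (rho (FreeGroup.mk L) x) P Q * om P Q := by
  intro L
  induction L with
  | nil =>
    intro s₀ Q hQ hL
    obtain ⟨P, hP⟩ := C_nonempty t
    have hne : iv s₀ ≠ t := R_ne (by simpa [FreeGroup.IsReduced] using hL)
    refine ⟨t, P, hne, hP, ?_⟩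
    have hb := Bf_bound x M hx P Q (cone_pair t P Q hP (C_sub_E _ _ hne.symm _ hQ)).2.1
    have := (abs_le.1 hb).1
    have e : rho (FreeGroup.mk []) x = x := by
      rw [← FreeGroup.one_eq_mk, map_one]; rfl
    rw [e]
    simp only [List.length_nil, Nat.cast_zero]
    linarith
  | cons s L ih =>
    intro s₀ Q hQ hL
    rw [List.cons_append, FreeGroup.isReduced_cons_cons] at hL
    have hne : iv s₀ ≠ s := R_ne hL.1
    have hQ' : C (iv s) (act (iv s) Q) := by
      apply act_mem
      rw [iv_iv]
      exact C_sub_E _ _ hne.symm _ hQ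
    obtain ⟨s', P, hs', hP, hb⟩ := ih s (act (iv s) Q) hQ' hL.2
    have hP' : C s (act s P) := act_mem _ _ (C_sub_E _ _ hs' _ hP)
    refine ⟨s, act s P, hne, hP', ?_⟩
    have e : rho (FreeGroup.mk (s :: L)) x = tau s (rho (FreeGroup.mk L) x) := by
      have : FreeGroup.mk (s :: L) = FreeGroup.mk [s] * FreeGroup.mk L := by
        rw [FreeGroup.mul_mk]; rfl
      rw [this, map_mul]; rfl
    rw [e, tau_act]
    have hc := (cone_pair s _ Q hP' (C_sub_E _ _ hne.symm _ hQ)).1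
    rw [← om_act] at hb
    push_cast [List.length_cons]
    linarith

lemma len_bound (γ : FreeGroup (Fin 2)) (x : Fin 3 → ℝ) (M : ℝ) (hx : ‖x‖ ≤ M)
    (hy : ‖rho γ x‖ ≤ M) : (γ.toWord.length : ℝ) ≤ 240 * M := by
  have hM : 0 ≤ M := (norm_nonneg x).trans hx
  rcases hw : γ.toWord with _ | ⟨s, L⟩
  · simpa using hM
  have hred : FreeGroup.IsReduced γ.toWord := FreeGroup.isReduced_toWord
  obtain ⟨t, ht⟩ : ∃ t, γ.toWord.getLast? = some t := by
    rw [hw]; exact ⟨_, List.getLast?_eq_some_getLast (by simp)⟩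
  have h1 : FreeGroup.IsReduced (γ.toWord ++ [t]) := by
    refine List.isChain_append.2 ⟨hred, by simp, ?_⟩
    intro a ha b hb
    simp_all
  have h2 : FreeGroup.IsReduced (s :: (γ.toWord ++ [t])) := by
    rw [hw, List.cons_append] at h1 ⊢
    exact FreeGroup.isReduced_cons_cons.2 ⟨fun _ => rfl, h1⟩
  obtain ⟨Q, hQ⟩ := C_nonempty (iv s)
  obtain ⟨s', P, hne, hP, hb⟩ := main x M hx t γ.toWord s Q hQ h2
  rw [FreeGroup.mk_toWord] at hb
  obtain ⟨-, hc, hpos⟩ := cone_pair s' P Q hP (C_sub_E _ _ hne.symm _ hQ)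
  have hb2 := (abs_le.1 (Bf_bound _ M hy P Q hc)).2
  rw [← hw]
  have := le_of_mul_le_mul_right (hb.trans hb2) hpos
  linarith

lemma proper (K : Set (Fin 3 → ℝ)) (hK : IsCompact K) :
    {γ : FreeGroup (Fin 2) | ((rho γ) '' K ∩ K).Nonempty}.Finite := by
  obtain ⟨M, hM⟩ := hK.isBounded.exists_norm_le
  obtain ⟨N, hN⟩ := exists_nat_ge (240 * M)
  refine ((List.finite_length_le (Fin 2 × Bool) N).preimage
    (FreeGroup.toWord_injective.injOn)).subset ?_
  rintro γ ⟨_, ⟨x, hx, rfl⟩, hy⟩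
  have := (len_bound γ x M (hM _ hx) (hM _ hy)).trans hN
  exact_mod_cast this

lemma free (γ : FreeGroup (Fin 2)) (hγ : γ ≠ 1) (x : Fin 3 → ℝ) : rho γ x ≠ x := by
  intro h
  have hp : ∀ n : ℕ, rho (γ ^ n) x = x := by
    intro n
    induction n with
    | zero => simp
    | succ n ih =>
      rw [pow_succ, map_mul]
      change rho (γ ^ n) (rho γ x) = x
      rw [h, ih]
  have hinj : Function.Injective (fun n : ℕ => γ ^ n) :=
    IsMulTorsionFree.pow_right_injective hγ
  refine Set.infinite_range_of_injective hinj ((proper {x} isCompact_singleton).subset ?_)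
  rintro _ ⟨n, rfl⟩
  exact ⟨x, ⟨x, rfl, hp n⟩, rfl⟩

end Margulis

/-- **Margulis**: there exists an injective homomorphism `ρ` from the free group `F₂` on two
generators into the affine group `Aff(ℝ³)` such that the resulting action of `F₂` on `ℝ³`
is free and properly discontinuous. -/
theorem margulis_proper_affine_action_of_free_group :
    ∃ ρ : FreeGroup (Fin 2) →* ((Fin 3 → ℝ) ≃ᵃ[ℝ] (Fin 3 → ℝ)),
      Function.Injective ρ ∧
      (∀ γ : FreeGroup (Fin 2), γ ≠ 1 → ∀ x : Fin 3 → ℝ, (ρ γ) x ≠ x) ∧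
      (∀ K : Set (Fin 3 → ℝ), IsCompact K →
        {γ : FreeGroup (Fin 2) | ((ρ γ) '' K ∩ K).Nonempty}.Finite) := by
  refine ⟨Margulis.rho, ?_, Margulis.free, Margulis.proper⟩
  rw [injective_iff_map_eq_one]
  intro γ h
  by_contra hne
  exact Margulis.free γ hne 0 (by rw [h]; rfl)
end

section
/- For every n ≥ 1 there exists an injective homomorphism ρ from the free group F₂ on two generators into the affine group Aff(ℝ^{4n−1}) such that the resulting action of F₂ on ℝ^{4n−1} is properly discontinuous and such that the linear part of ρ(γ) lies in SO(2n,2n−1) for every γ ∈ F₂, where SO(2n,2n−1) = {A ∈ SL(4n−1,ℝ) : Aᵀ J A = J} for J the diagonal matrix with 2n entries equal to 1 followed by 2n−1 entries equal to −1. -/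
open Matrix


namespace Marg

/-- linear part of a letter on ℝ³ -/
noncomputable def lin (s : Fin 2 × Bool) (v : ℝ × ℝ × ℝ) : ℝ × ℝ × ℝ :=
  if s.1 = 0 then
    (41/9 * v.1 + (if s.2 then 40/9 else -(40/9)) * v.2.2, v.2.1,
      (if s.2 then 40/9 else -(40/9)) * v.1 + 41/9 * v.2.2)
  else
    (v.1, 41/9 * v.2.1 + (if s.2 then 40/9 else -(40/9)) * v.2.2,
      (if s.2 then 40/9 else -(40/9)) * v.2.1 + 41/9 * v.2.2)

/-- translation part -/
noncomputable def tr (s : Fin 2 × Bool) : ℝ × ℝ × ℝ :=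
  if s.1 = 0 then (0, (if s.2 then 1 else -1), 0) else ((if s.2 then -1 else 1), 0, 0)

noncomputable def nn (p q : ℝ × ℝ × ℝ) : ℝ := p.2.2 * q.2.2 - p.1 * q.1 - p.2.1 * q.2.1

noncomputable def dt (x p q : ℝ × ℝ × ℝ) : ℝ :=
  x.1 * (p.2.1 * q.2.2 - p.2.2 * q.2.1) - x.2.1 * (p.1 * q.2.2 - p.2.2 * q.1)
    + x.2.2 * (p.1 * q.2.1 - p.2.1 * q.1)

noncomputable def FF (p q x : ℝ × ℝ × ℝ) : ℝ := dt x p q / nn p q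

/-- ping-pong domains -/
def DD (s : Fin 2 × Bool) (p : ℝ × ℝ × ℝ) : Prop :=
  p.1 ^ 2 + p.2.1 ^ 2 = p.2.2 ^ 2 ∧ 0 < p.2.2 ∧
    4/5 * p.2.2 ≤ (if s.2 then 1 else -1) * (if s.1 = 0 then p.1 else p.2.1)

def iv (s : Fin 2 × Bool) : Fin 2 × Bool := (s.1, !s.2)

theorem nn_lin (s p q) : nn (lin s p) (lin s q) = nn p q := by
  obtain ⟨i, b⟩ := s
  fin_cases i <;> cases b <;> simp [nn, lin] <;> ring

theorem dt_lin (s x p q) : dt (lin s x) (lin s p) (lin s q) = dt x p q := by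
  obtain ⟨i, b⟩ := s
  fin_cases i <;> cases b <;> simp [dt, lin] <;> ring

theorem dt_add (x y p q) : dt (x + y) p q = dt x p q + dt y p q := by
  simp [dt]; ring

theorem lin_iv (s p) : lin s (lin (iv s) p) = p := by
  obtain ⟨i, b⟩ := s
  obtain ⟨x, y, z⟩ := p
  fin_cases i <;> cases b <;> simp [lin, iv] <;> constructor <;> ring

theorem FF_step (s p q x) :
    FF p (lin s q) (lin s x + tr s) = FF (lin (iv s) p) q x + FF p (lin s q) (tr s) := by
  have h : p = lin s (lin (iv s) p) := (lin_iv s p).symm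
  unfold FF
  rw [dt_add, add_div]
  congr 1
  conv_lhs => rw [h]
  rw [nn_lin, dt_lin]

/-- real core: coordinates outside -/
theorem core_le {a b c : ℝ} (h : a ^ 2 + b ^ 2 = c ^ 2) (hc : 0 < c) (hb : 4/5 * c ≤ |b|) :
    |a| ≤ 3/5 * c := by
  apply abs_le_of_sq_le_sq _ (by positivity)
  have := sq_abs b
  nlinarith [abs_nonneg b]

/-- sign -/
noncomputable def sg (b : Bool) : ℝ := if b then 1 else -1
noncomputable def co (i : Fin 2) (p : ℝ × ℝ × ℝ) : ℝ := if i = 0 then p.1 else p.2.1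

theorem DD_out {s t} (hst : s ≠ t) {p} (h : DD t p) : sg s.2 * co s.1 p ≤ 3/5 * p.2.2 := by
  obtain ⟨i, b⟩ := s
  obtain ⟨j, c⟩ := t
  obtain ⟨x, y, z⟩ := p
  obtain ⟨h1, h2, h3⟩ := h
  simp only at h1 h2
  have key : ∀ a b : ℝ, a ^ 2 + b ^ 2 = z ^ 2 → (4/5 * z ≤ b ∨ 4/5 * z ≤ -b) →
      a ≤ 3/5 * z ∧ -a ≤ 3/5 * z := by
    intro a b h hb
    have := core_le h h2 (by rcases hb with hb | hb
                             · exact hb.trans (le_abs_self _)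
                             · exact hb.trans (neg_le_abs _))
    exact ⟨(le_abs_self _).trans this, (neg_le_abs _).trans this⟩
  have k1 := key x y h1
  have k2 := key y x (by linarith)
  fin_cases i <;> fin_cases j <;> cases b <;> cases c <;>
    simp [sg, co] at h3 hst ⊢ <;> first | linarith | skip
  all_goals first
    | exact (k1 (Or.inl (by linarith))).1 | exact (k1 (Or.inl (by linarith))).2
    | exact (k1 (Or.inr (by linarith))).1 | exact (k1 (Or.inr (by linarith))).2
    | exact (k2 (Or.inl (by linarith))).1 | exact (k2 (Or.inl (by linarith))).2
    | exact (k2 (Or.inr (by linarith))).1 | exact (k2 (Or.inr (by linarith))).2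

theorem DD_lin {s t} (hst : t ≠ iv s) {p} (h : DD t p) : DD s (lin s p) := by
  have ho := DD_out hst.symm h
  obtain ⟨i, b⟩ := s
  obtain ⟨x, y, z⟩ := p
  obtain ⟨h1, h2, -⟩ := h
  simp only at h1 h2
  have hx : |x| ≤ z := abs_le_of_sq_le_sq (by nlinarith) h2.le
  have hy : |y| ≤ z := abs_le_of_sq_le_sq (by nlinarith) h2.le
  rw [abs_le] at hx hy
  fin_cases i <;> cases b <;> simp [sg, co, iv] at ho <;>
    refine ⟨?_, ?_, ?_⟩ <;> simp [lin] <;> nlinarith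

theorem sep {s t} (hst : s ≠ t) {p q} (hp : DD t p) (hq : DD s q) :
    p.2.2 * q.2.2 ≤ 50 * nn p q ∧ nn p q ≤ 2 * (p.2.2 * q.2.2) ∧
    nn p q ≤ 10 * dt (tr s) p q := by
  have ho := DD_out hst hp
  obtain ⟨i, b⟩ := s
  obtain ⟨x, y, z⟩ := p
  obtain ⟨x', y', z'⟩ := q
  obtain ⟨h1, h2, -⟩ := hp
  obtain ⟨h1', h2', h3'⟩ := hq
  simp only at h1 h2 h1' h2' ho
  have hz : 0 < z * z' := mul_pos h2 h2'
  have e : 2 * (z * z') * (z * z' - x * x' - y * y') =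
      (z' * x - z * x') ^ 2 + (z' * y - z * y') ^ 2 := by
    linear_combination (-z' ^ 2) * h1 - z ^ 2 * h1'
  have e' : 2 * (z * z') * (z * z' + x * x' + y * y') =
      (z' * x + z * x') ^ 2 + (z' * y + z * y') ^ 2 := by
    linear_combination (-z' ^ 2) * h1 - z ^ 2 * h1'
  have hN2 : z * z' - x * x' - y * y' ≤ 2 * (z * z') := by
    have : 0 ≤ z * z' + x * x' + y * y' := by
      by_contra! h
      nlinarith [sq_nonneg (z' * x + z * x'), sq_nonneg (z' * y + z * y')]
    linarith
  have main : ∀ d : ℝ, 1/5 * (z * z') ≤ d →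
      d ^ 2 ≤ (z' * x - z * x') ^ 2 + (z' * y - z * y') ^ 2 →
      z * z' ≤ 50 * (z * z' - x * x' - y * y') := by
    intro d hd hd2
    by_contra! h
    have : (1/5 * (z * z')) ^ 2 ≤ d ^ 2 := pow_le_pow_left₀ (by positivity) hd 2
    nlinarith
  refine ⟨?_, hN2, ?_⟩
  · fin_cases i <;> cases b <;> simp [sg, co] at ho h3' <;> simp only [nn]
    · exact main (z' * x - z * x') (by nlinarith) (by nlinarith [sq_nonneg (z' * y - z * y')])
    · exact main (z * x' - z' * x) (by nlinarith) (by nlinarith [sq_nonneg (z' * y - z * y')])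
    · exact main (z' * y - z * y') (by nlinarith) (by nlinarith [sq_nonneg (z' * x - z * x')])
    · exact main (z * y' - z' * y) (by nlinarith) (by nlinarith [sq_nonneg (z' * x - z * x')])
  · refine le_trans hN2 ?_
    fin_cases i <;> cases b <;> simp [sg, co] at ho h3' <;> simp [dt, tr] <;> nlinarith

theorem FF_tr {s t} (hst : s ≠ t) {p q} (hp : DD t p) (hq : DD s q) :
    1/10 ≤ FF p q (tr s) := by
  obtain ⟨h1, h2, h3⟩ := sep hst hp hq
  have hz : 0 < p.2.2 * q.2.2 := mul_pos hp.2.1 hq.2.1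
  unfold FF
  rw [le_div_iff₀ (by linarith)]
  linarith

theorem FF_bd {s t} (hst : s ≠ t) {p q} (hp : DD t p) (hq : DD s q) {M : ℝ} {x : ℝ × ℝ × ℝ}
    (hx : |x.1| ≤ M) (hy : |x.2.1| ≤ M) (hw : |x.2.2| ≤ M) :
    |FF p q x| ≤ 300 * M := by
  obtain ⟨h1, h2, -⟩ := sep hst hp hq
  have hz : 0 < p.2.2 * q.2.2 := mul_pos hp.2.1 hq.2.1
  have hM : 0 ≤ M := (abs_nonneg _).trans hx
  have b1 : ∀ {s p}, DD s p → |p.1| ≤ p.2.2 ∧ |p.2.1| ≤ p.2.2 := by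
    intro s p h
    obtain ⟨h1, h2, -⟩ := h
    exact ⟨abs_le_of_sq_le_sq (by nlinarith) h2.le, abs_le_of_sq_le_sq (by nlinarith) h2.le⟩
  obtain ⟨p1, p2⟩ := b1 hp
  obtain ⟨q1, q2⟩ := b1 hq
  have p3 : |p.2.2| ≤ p.2.2 := (abs_of_pos hp.2.1).le
  have q3 : |q.2.2| ≤ q.2.2 := (abs_of_pos hq.2.1).le
  have cr : ∀ a b c d : ℝ, |a| ≤ p.2.2 → |b| ≤ q.2.2 → |c| ≤ p.2.2 → |d| ≤ q.2.2 →
      |a * b - c * d| ≤ 2 * (p.2.2 * q.2.2) := by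
    intro a b c d ha hb hc hd
    have := abs_sub (a * b) (c * d)
    rw [abs_mul, abs_mul] at this
    have e1 := mul_le_mul ha hb (abs_nonneg _) hp.2.1.le
    have e2 := mul_le_mul hc hd (abs_nonneg _) hp.2.1.le
    linarith
  have t : ∀ u v : ℝ, |u| ≤ M → |v| ≤ 2 * (p.2.2 * q.2.2) →
      |u * v| ≤ M * (2 * (p.2.2 * q.2.2)) := by
    intro u v hu hv
    rw [abs_mul]
    exact mul_le_mul hu hv (abs_nonneg _) hM
  have t1 := t _ _ hx (cr _ _ _ _ p2 q3 p3 q2)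
  have t2 := t _ _ hy (cr _ _ _ _ p1 q3 p3 q1)
  have t3 := t _ _ hw (cr _ _ _ _ p1 q2 p2 q1)
  unfold FF
  rw [abs_div, abs_of_pos (show 0 < nn p q by linarith), div_le_iff₀ (by linarith)]
  have : |dt x p q| ≤ 6 * M * (p.2.2 * q.2.2) := by
    unfold dt
    rw [abs_le] at *
    constructor <;> linarith
  nlinarith

noncomputable def act : List (Fin 2 × Bool) → ℝ × ℝ × ℝ → ℝ × ℝ × ℝ
  | [], x => x
  | s :: L, x => lin s (act L x) + tr s

noncomputable def pt (s : Fin 2 × Bool) : ℝ × ℝ × ℝ :=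
  if s.1 = 0 then ((if s.2 then 1 else -1), 0, 1) else (0, (if s.2 then 1 else -1), 1)

theorem DD_pt (s) : DD s (pt s) := by
  obtain ⟨i, b⟩ := s
  fin_cases i <;> cases b <;> simp [DD, pt] <;> norm_num

theorem ne_iv (s) : s ≠ iv s := by
  obtain ⟨i, b⟩ := s
  cases b <;> simp [iv]

theorem iv_iv (s) : iv (iv s) = s := by
  obtain ⟨i, b⟩ := s
  cases b <;> simp [iv]

theorem word : ∀ (L : List (Fin 2 × Bool)) (s t : Fin 2 × Bool) (p : ℝ × ℝ × ℝ),
    FreeGroup.IsReduced (s :: L) → s ≠ t → DD t p →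
    ∃ q, DD s q ∧ ∃ s' t' p' q', s' ≠ t' ∧ DD t' p' ∧ DD s' q' ∧
      ∀ x, FF p' q' x + ((s :: L).length : ℝ) / 10 ≤ FF p q (act (s :: L) x)
  | [], s, t, p, hL, hst, hp => by
    refine ⟨lin s (pt s), DD_lin (ne_iv s) (DD_pt s), s, iv s, lin (iv s) p, pt s, ne_iv s,
      DD_lin (by rw [iv_iv]; exact hst.symm) hp, DD_pt s, fun x => ?_⟩
    have := FF_tr hst hp (DD_lin (ne_iv s) (DD_pt s))
    simp only [act, FF_step, List.length_singleton]
    push_cast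
    linarith
  | r :: L, s, t, p, hL, hst, hp => by
    have hr : r ≠ iv s := by
      rintro rfl
      rw [FreeGroup.isReduced_cons_cons] at hL
      have := hL.1 rfl
      simp [iv] at this
    have hL' : FreeGroup.IsReduced (r :: L) := by
      rw [FreeGroup.isReduced_cons_cons] at hL
      exact hL.2
    obtain ⟨q, hq, s', t', p', q', h1, h2, h3, h4⟩ := word L r (iv s) (lin (iv s) p) hL' hr
      (DD_lin (by rw [iv_iv]; exact hst.symm) hp)
    refine ⟨lin s q, DD_lin hr hq, s', t', p', q', h1, h2, h3, fun x => ?_⟩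
    have := FF_tr hst hp (DD_lin hr hq)
    have h5 := h4 x
    rw [act, FF_step, List.length_cons]
    push_cast
    linarith

theorem length_bd (L : List (Fin 2 × Bool)) (hL : FreeGroup.IsReduced L) {M : ℝ} (hM : 0 ≤ M)
    (x : ℝ × ℝ × ℝ) (hx : |x.1| ≤ M ∧ |x.2.1| ≤ M ∧ |x.2.2| ≤ M)
    (hy : |(act L x).1| ≤ M ∧ |(act L x).2.1| ≤ M ∧ |(act L x).2.2| ≤ M) :
    (L.length : ℝ) ≤ 6000 * M := by
  cases L with
  | nil => simp; positivity
  | cons s L =>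
    obtain ⟨q, hq, s', t', p', q', h1, h2, h3, h4⟩ := word L s (iv s) _ hL (ne_iv s) (DD_pt _)
    have a := FF_bd h1 h2 h3 hx.1 hx.2.1 hx.2.2
    have b := FF_bd (ne_iv s) (DD_pt _) hq hy.1 hy.2.1 hy.2.2
    have := h4 x
    rw [abs_le] at a b
    linarith

end Marg

namespace Marg

section
variable {ι : Type} [Fintype ι] [DecidableEq ι]

noncomputable def BB (j k : ι) : Matrix ι ι ℝ :=
  1 + (single j j (2/3) + single k k (2/3) + single j k (4/3) + single k j (4/3))

theorem BB_form {j k : ι} (hjk : j ≠ k) (d : ι → ℝ) (hj : d j = 1) (hk : d k = -1) :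
    (BB j k)ᵀ * diagonal d * BB j k = diagonal d := by
  have e1 : ∀ (a b : ι) (c : ℝ), diagonal d * single a b c = single a b (d a * c) := by
    intro a b c
    ext u v
    by_cases h : a = u <;> simp [diagonal_mul, single_apply, h]
  have e2 : ∀ (a b : ι) (c : ℝ), single a b c * diagonal d = single a b (c * d b) := by
    intro a b c
    ext u v
    by_cases h : b = v <;> simp [mul_diagonal, single_apply, h]
  have hkj := hjk.symm
  have t : (BB j k)ᵀ = BB j k := by
    simp [BB, transpose_add, transpose_single]; abel
  rw [t]
  unfold BB
  simp only [add_mul, mul_add, one_mul, mul_one, e1, e2, single_mul_single_same, hj, hk,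
    single_mul_single_of_ne _ _ _ _ hjk, single_mul_single_of_ne _ _ _ _ hkj, add_zero, zero_add]
  ext u v
  simp only [Matrix.add_apply, single_apply]
  split_ifs <;> grind

theorem BB_det {j k : ι} (hjk : j ≠ k) : (BB j k * BB j k).det = 1 := by
  have h := congrArg det (BB_form hjk (fun i => if i = k then -1 else 1) (by simp [hjk]) (by simp))
  rw [det_mul, det_mul, det_transpose] at h
  rw [det_mul]
  have hd : (diagonal (fun i : ι => if i = k then (-1:ℝ) else 1)).det ≠ 0 := by
    rw [det_diagonal, Finset.prod_ne_zero_iff]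
    intro a _
    split_ifs <;> norm_num
  apply mul_left_cancel₀ hd
  linear_combination h

noncomputable def ll (j k : ι) (hjk : j ≠ k) : (ι → ℝ) ≃ₗ[ℝ] (ι → ℝ) :=
  Matrix.toLinearEquiv' (BB j k * BB j k)
    (Matrix.invertibleOfIsUnitDet _ (by rw [BB_det hjk]; exact isUnit_one))

theorem ll_mat (j k : ι) (hjk : j ≠ k) :
    LinearMap.toMatrix' (ll j k hjk).toLinearMap = BB j k * BB j k := by
  have : (ll j k hjk).toLinearMap = Matrix.toLin' (BB j k * BB j k) := by
    unfold ll; exact Matrix.toLinearEquiv'_apply _ _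
  rw [this, LinearMap.toMatrix'_toLin']

theorem BB_mulVec {j k : ι} (hjk : j ≠ k) (x : ι → ℝ) (i : ι) :
    (BB j k *ᵥ x) i = if i = j then 5/3 * x j + 4/3 * x k else
      if i = k then 4/3 * x j + 5/3 * x k else x i := by
  have hkj := hjk.symm
  have e : ∀ (a b : ι) (c : ℝ), (single a b c *ᵥ x) i = if i = a then c * x b else 0 := by
    intro a b c
    rw [single_mulVec]; simp [Function.update_apply]
  simp only [BB, add_mulVec, one_mulVec, Pi.add_apply, e]
  split_ifs <;> grind

theorem ll_apply {j k : ι} (hjk : j ≠ k) (x : ι → ℝ) (i : ι) :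
    (ll j k hjk x) i = if i = j then 41/9 * x j + 40/9 * x k else
      if i = k then 40/9 * x j + 41/9 * x k else x i := by
  have : ll j k hjk x = BB j k *ᵥ (BB j k *ᵥ x) := by
    rw [Matrix.mulVec_mulVec, ← ll_mat j k hjk, ← Matrix.toLin'_apply, Matrix.toLin'_toMatrix']
    rfl
  rw [this, BB_mulVec hjk, BB_mulVec hjk, BB_mulVec hjk, BB_mulVec hjk]
  have hkj := hjk.symm
  simp only [hkj, if_true, if_false]
  split_ifs <;> ring

noncomputable def TT (j k : ι) (hjk : j ≠ k) (v : ι → ℝ) : (ι → ℝ) ≃ᵃ[ℝ] (ι → ℝ) :=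
  AffineEquiv.constVAdd ℝ (ι → ℝ) v * (ll j k hjk).toAffineEquiv

theorem TT_apply (j k : ι) (hjk : j ≠ k) (v x : ι → ℝ) : TT j k hjk v x = v + ll j k hjk x := rfl

theorem TT_linear (j k : ι) (hjk : j ≠ k) (v : ι → ℝ) : (TT j k hjk v).linear = ll j k hjk := by
  ext1 x; rfl

def pr (i0 i1 i2 : ι) (x : ι → ℝ) : ℝ × ℝ × ℝ := (x i0, x i1, x i2)

noncomputable def gen (i0 i1 i2 : ι) (h0 : i0 ≠ i2) (h1 : i1 ≠ i2) (i : Fin 2) :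
    (ι → ℝ) ≃ᵃ[ℝ] (ι → ℝ) :=
  if i = 0 then TT i0 i2 h0 (Pi.single i1 1) else TT i1 i2 h1 (Pi.single i0 (-1))

theorem gen_pr (i0 i1 i2 : ι) (h0 : i0 ≠ i2) (h1 : i1 ≠ i2) (h01 : i0 ≠ i1) (i : Fin 2)
    (x : ι → ℝ) : pr i0 i1 i2 (gen i0 i1 i2 h0 h1 i x) =
      lin (i, true) (pr i0 i1 i2 x) + tr (i, true) := by
  have := h0.symm
  have := h1.symm
  have := h01.symm
  fin_cases i <;> simp [gen, TT_apply, pr, ll_apply, lin, tr, *] <;> ring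

theorem inv_pr (i0 i1 i2 : ι) (h0 : i0 ≠ i2) (h1 : i1 ≠ i2) (h01 : i0 ≠ i1) (i : Fin 2)
    (x : ι → ℝ) : pr i0 i1 i2 ((gen i0 i1 i2 h0 h1 i)⁻¹ x) =
      lin (i, false) (pr i0 i1 i2 x) + tr (i, false) := by
  have h := gen_pr i0 i1 i2 h0 h1 h01 i ((gen i0 i1 i2 h0 h1 i)⁻¹ x)
  have hx : gen i0 i1 i2 h0 h1 i ((gen i0 i1 i2 h0 h1 i)⁻¹ x) = x :=
    AffineEquiv.apply_symm_apply _ _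
  rw [hx] at h
  rw [h]
  generalize pr i0 i1 i2 ((gen i0 i1 i2 h0 h1 i)⁻¹ x) = y
  obtain ⟨a, b, c⟩ := y
  fin_cases i <;> simp [lin, tr] <;> constructor <;> ring

noncomputable def rh (i0 i1 i2 : ι) (h0 : i0 ≠ i2) (h1 : i1 ≠ i2) :
    FreeGroup (Fin 2) →* ((ι → ℝ) ≃ᵃ[ℝ] (ι → ℝ)) := FreeGroup.lift (gen i0 i1 i2 h0 h1)

theorem rh_pr (i0 i1 i2 : ι) (h0 : i0 ≠ i2) (h1 : i1 ≠ i2) (h01 : i0 ≠ i1)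
    (x : ι → ℝ) (L : List (Fin 2 × Bool)) :
    pr i0 i1 i2 (rh i0 i1 i2 h0 h1 (FreeGroup.mk L) x) = act L (pr i0 i1 i2 x) := by
  induction L with
  | nil => rfl
  | cons s L ih =>
    rw [act, ← ih]
    unfold rh
    rw [FreeGroup.lift_mk, FreeGroup.lift_mk, List.map_cons, List.prod_cons]
    obtain ⟨i, b⟩ := s
    cases b
    · exact inv_pr i0 i1 i2 h0 h1 h01 i _
    · exact gen_pr i0 i1 i2 h0 h1 h01 i _

theorem rh_proper (i0 i1 i2 : ι) (h0 : i0 ≠ i2) (h1 : i1 ≠ i2) (h01 : i0 ≠ i1)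
    (K : Set (ι → ℝ)) (hK : IsCompact K) :
    {γ : FreeGroup (Fin 2) | ((rh i0 i1 i2 h0 h1 γ) '' K ∩ K).Nonempty}.Finite := by
  obtain ⟨M, hM⟩ := hK.isBounded.exists_norm_le
  have hb : ∀ x ∈ K, ∀ i, |x i| ≤ |M| := fun x hx i =>
    (norm_le_pi_norm x i).trans ((hM x hx).trans (le_abs_self M))
  refine Set.Finite.subset ((List.finite_length_le (Fin 2 × Bool) ⌊6000 * |M|⌋₊).preimage
    (FreeGroup.toWord_injective.injOn)) ?_
  rintro γ ⟨y, ⟨x, hx, rfl⟩, hy⟩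
  simp only [Set.mem_preimage, Set.mem_ofPred_eq]
  apply Nat.le_floor
  have e := rh_pr i0 i1 i2 h0 h1 h01 x γ.toWord
  rw [FreeGroup.mk_toWord] at e
  refine length_bd γ.toWord FreeGroup.isReduced_toWord (abs_nonneg M) (pr i0 i1 i2 x)
    ⟨hb x hx _, hb x hx _, hb x hx _⟩ ?_
  rw [← e]
  exact ⟨hb _ hy _, hb _ hy _, hb _ hy _⟩

theorem rh_inj (i0 i1 i2 : ι) (h0 : i0 ≠ i2) (h1 : i1 ≠ i2) (h01 : i0 ≠ i1) :
    Function.Injective (rh i0 i1 i2 h0 h1) := by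
  rw [injective_iff_map_eq_one]
  intro γ hγ
  by_contra hne
  have hf := rh_proper i0 i1 i2 h0 h1 h01 {0} isCompact_singleton
  refine Set.infinite_of_injective_forall_mem (f := fun n : ℕ => γ ^ n)
    (injective_pow_iff_not_isOfFinOrder.mpr ?_) (fun n => ?_) hf
  · rw [isOfFinOrder_iff_eq_one]
    exact hne
  · refine ⟨0, ⟨0, rfl, ?_⟩, rfl⟩
    simp [map_pow, hγ]

theorem hom_form (d : ι → ℝ) (X : FreeGroup (Fin 2) → Matrix ι ι ℝ) (hone : X 1 = 1)
    (hmul : ∀ a b, X (a * b) = X a * X b)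
    (hof : ∀ i, (X (FreeGroup.of i))ᵀ * diagonal d * X (FreeGroup.of i) = diagonal d ∧
      (X (FreeGroup.of i)).det = 1) (γ : FreeGroup (Fin 2)) :
    (X γ)ᵀ * diagonal d * X γ = diagonal d ∧ (X γ).det = 1 := by
  refine FreeGroup.induction_on (C := fun γ => (X γ)ᵀ * diagonal d * X γ = diagonal d ∧
    (X γ).det = 1) γ ?_ hof ?_ ?_
  · rw [hone]; simp
  · intro i ih
    have h := hmul (FreeGroup.of i) (FreeGroup.of i)⁻¹
    rw [mul_inv_cancel, hone] at h
    change (X (FreeGroup.of i)⁻¹)ᵀ * diagonal d * X (FreeGroup.of i)⁻¹ = diagonal d ∧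
      (X (FreeGroup.of i)⁻¹).det = 1
    change (X (FreeGroup.of i))ᵀ * diagonal d * X (FreeGroup.of i) = diagonal d ∧
      (X (FreeGroup.of i)).det = 1 at ih
    generalize X (FreeGroup.of i)⁻¹ = B at *
    generalize X (FreeGroup.of i) = A at *
    constructor
    · calc Bᵀ * diagonal d * B = Bᵀ * (Aᵀ * diagonal d * A) * B := by rw [ih.1]
        _ = (A * B)ᵀ * diagonal d * (A * B) := by simp only [transpose_mul, Matrix.mul_assoc]
        _ = _ := by rw [← h]; simp
    · have := congrArg det h
      rw [det_mul, ih.2] at this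
      simpa using this.symm
  · intro a b iha ihb
    refine ⟨?_, by rw [hmul, det_mul, iha.2, ihb.2, one_mul]⟩
    rw [hmul, transpose_mul]
    calc _ = (X b)ᵀ * ((X a)ᵀ * diagonal d * X a) * X b := by
          simp only [Matrix.mul_assoc]
      _ = _ := by rw [iha.1, ihb.1]

theorem rh_lin (i0 i1 i2 : ι) (h0 : i0 ≠ i2) (h1 : i1 ≠ i2) (d : ι → ℝ) (d0 : d i0 = 1)
    (d1 : d i1 = 1) (d2 : d i2 = -1) (γ : FreeGroup (Fin 2)) :
    (LinearMap.toMatrix' ((rh i0 i1 i2 h0 h1 γ).linear.toLinearMap))ᵀ * diagonal d *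
      LinearMap.toMatrix' ((rh i0 i1 i2 h0 h1 γ).linear.toLinearMap) = diagonal d ∧
    (LinearMap.toMatrix' ((rh i0 i1 i2 h0 h1 γ).linear.toLinearMap)).det = 1 := by
  have hone : LinearMap.toMatrix' ((rh i0 i1 i2 h0 h1 1).linear.toLinearMap) = 1 := by
    rw [map_one]; exact LinearMap.toMatrix'_id
  have hmul : ∀ a b, LinearMap.toMatrix' ((rh i0 i1 i2 h0 h1 (a * b)).linear.toLinearMap) =
      LinearMap.toMatrix' ((rh i0 i1 i2 h0 h1 a).linear.toLinearMap) *
      LinearMap.toMatrix' ((rh i0 i1 i2 h0 h1 b).linear.toLinearMap) := by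
    intro a b
    rw [map_mul, ← LinearMap.toMatrix'_comp]; rfl
  have hB : ∀ j k : ι, j ≠ k → d j = 1 → d k = -1 →
      (BB j k * BB j k)ᵀ * diagonal d * (BB j k * BB j k) = diagonal d := by
    intro j k hjk hj hk
    have := BB_form hjk d hj hk
    calc _ = (BB j k)ᵀ * ((BB j k)ᵀ * diagonal d * BB j k) * BB j k := by
          simp only [transpose_mul, Matrix.mul_assoc]
      _ = _ := by rw [this, this]
  refine hom_form d (fun g => LinearMap.toMatrix' ((rh i0 i1 i2 h0 h1 g).linear.toLinearMap))
    hone hmul (fun i => ?_) γ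
  have : rh i0 i1 i2 h0 h1 (FreeGroup.of i) = gen i0 i1 i2 h0 h1 i := by simp [rh]
  simp only [this]
  unfold gen
  split_ifs
  · rw [TT_linear, ll_mat]
    exact ⟨hB _ _ h0 d0 d2, BB_det h0⟩
  · rw [TT_linear, ll_mat]
    exact ⟨hB _ _ h1 d1 d2, BB_det h1⟩

end
end Marg

/-- **Proper affine actions with linear part in `SO(2n, 2n-1)`** (Margulis for `n = 1`;
Smilga, Danciger–Guéritaud–Kassel, Žager Korenjak in general): for every `n ≥ 1` there is an
injective homomorphism `ρ : F₂ → Aff(ℝ^{4n-1})` whose action on `ℝ^{4n-1}` is properly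
discontinuous and such that the linear part `A` of each `ρ(γ)` satisfies `Aᵀ J A = J` and
`det A = 1`, where `J = diag(1,…,1,-1,…,-1)` with `2n` entries `1` and `2n-1` entries `-1`. -/
theorem proper_affine_action_free_group_SO_2n_2nsub1 (n : ℕ) (hn : 1 ≤ n) :
    ∃ ρ : FreeGroup (Fin 2) →* ((Fin (4 * n - 1) → ℝ) ≃ᵃ[ℝ] (Fin (4 * n - 1) → ℝ)),
      Function.Injective ρ ∧
      (∀ K : Set (Fin (4 * n - 1) → ℝ), IsCompact K →
        {γ : FreeGroup (Fin 2) | ((ρ γ) '' K ∩ K).Nonempty}.Finite) ∧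
      (∀ γ : FreeGroup (Fin 2),
        (LinearMap.toMatrix' ((ρ γ).linear.toLinearMap))ᵀ *
            Matrix.diagonal (fun i : Fin (4 * n - 1) =>
              if (i : ℕ) < 2 * n then (1 : ℝ) else -1) *
            LinearMap.toMatrix' ((ρ γ).linear.toLinearMap) =
          Matrix.diagonal (fun i : Fin (4 * n - 1) =>
            if (i : ℕ) < 2 * n then (1 : ℝ) else -1) ∧
        (LinearMap.toMatrix' ((ρ γ).linear.toLinearMap)).det = 1) := by
  obtain ⟨m, rfl⟩ : ∃ m, n = m + 1 := ⟨n - 1, by omega⟩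
  let i0 : Fin (4 * (m + 1) - 1) := ⟨0, by omega⟩
  let i1 : Fin (4 * (m + 1) - 1) := ⟨1, by omega⟩
  let i2 : Fin (4 * (m + 1) - 1) := ⟨4 * m + 2, by omega⟩
  have h0 : i0 ≠ i2 := by simp [i0, i2]
  have h1 : i1 ≠ i2 := by simp [i1, i2]
  have h01 : i0 ≠ i1 := by simp [i0, i1]
  refine ⟨Marg.rh i0 i1 i2 h0 h1, Marg.rh_inj i0 i1 i2 h0 h1 h01,
    Marg.rh_proper i0 i1 i2 h0 h1 h01, Marg.rh_lin i0 i1 i2 h0 h1 _ ?_ ?_ ?_⟩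
  · simp [i0]
  · simp only [i1]
    rw [if_pos (by omega)]
  · simp only [i2]
    rw [if_neg (by omega)]
end
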